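/- Every weak-QFT subshift contains a periodic point; in particular, a weak-QFT is never topologically minimal. -/

import Mathlib

open Filter Set MeasureTheory

namespace QFTPaper

variable {A : Type*} {B : Type*}

/-- The left shift on bi-infinite sequences over the alphabet `A`. -/
def shift (x : ℤ → A) : ℤ → A := fun n => x (n + 1)

/-- A subshift: a closed, shift-invariant subset of `A^ℤ`. -/
def IsSubshift [TopologicalSpace A] (X : Set (ℤ → A)) : Prop :=
  IsClosed X ∧ shift '' X = X

/-- The finite word `w` occurs in `x` at position `k`. -/
def OccursAt (w : List A) (x : ℤ → A) (k : ℤ) : Prop :=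
  ∀ i : Fin w.length, x (k + (i : ℕ)) = w.get i

/-- The language of `X`: words of length `n` occurring in elements of `X`
(at position `0`, which is no restriction by shift-invariance). -/
def Lang (X : Set (ℤ → A)) (n : ℕ) : Set (List A) :=
  { w | w.length = n ∧ ∃ x ∈ X, OccursAt w x 0 }

/-- Topological entropy of a subshift. -/
noncomputable def hTop (X : Set (ℤ → A)) : ℝ :=
  limsup (fun n : ℕ => Real.log (Nat.card ↥(Lang X n)) / (n : ℝ)) atTop

/-- Follower set of the finite word `w = A₋ₙ…A₀` (listed from `A₋ₙ` to `A₀`):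
the set of one-sided sequences `B₀B₁B₂…` with `B ∈ X` and `B₋ₙ…B₀ = A₋ₙ…A₀`,
realized by requiring `w` to occur in `B` at positions `0,…,n` and reading off
the tail of `B` starting at the position of the last letter of `w`.
For the empty word this gives `X₊` (by shift-invariance). -/
def fol (X : Set (ℤ → A)) (w : List A) : Set (ℕ → A) :=
  { y | ∃ B ∈ X, (∀ i : Fin w.length, B ((i : ℕ) : ℤ) = w.get i) ∧
        ∀ k : ℕ, y k = B ((w.length : ℤ) - 1 + (k : ℤ)) }

/-- `w = A₋ₙ…A₀` is a left constraint:
`∅ ≠ fol(A₋ₙ…A₀) ⊊ fol(A₋ₙ₊₁…A₀)`. -/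
def IsLeftConstraint (X : Set (ℤ → A)) (w : List A) : Prop :=
  w ≠ [] ∧ fol X w ≠ ∅ ∧ fol X w ⊂ fol X w.tail

/-- `𝒞(X, n)`: the set of left constraints of length `n`. -/
def LC (X : Set (ℤ → A)) (n : ℕ) : Set (List A) :=
  { w | w.length = n ∧ IsLeftConstraint X w }

/-- The left constraint entropy `h_𝒞(X) = limsup (1/n) log⁺ #𝒞(X,n)`. -/
noncomputable def hC (X : Set (ℤ → A)) : ℝ :=
  limsup (fun n : ℕ => max 0 (Real.log (Nat.card ↥(LC X n))) / (n : ℝ)) atTop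

/-- The time-reversed subshift `X̄`. -/
def rev (X : Set (ℤ → A)) : Set (ℤ → A) :=
  (fun x : ℤ → A => fun n : ℤ => x (-n)) '' X

/-- The symmetric constraint entropy `h_𝒮𝒞(X) = min (h_𝒞(X), h_𝒞(X̄))`. -/
noncomputable def hSC (X : Set (ℤ → A)) : ℝ := min (hC X) (hC (rev X))

/-- Subshift of quasi-finite type: `h_𝒮𝒞(X) < h_top(X)`. -/
def IsQFT [TopologicalSpace A] (X : Set (ℤ → A)) : Prop :=
  IsSubshift X ∧ hSC X < hTop X

/-- The word `B₋ₘ…B₀` read off from a one-sided past `b` (where `b j = B₋ⱼ`). -/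
def wordOf (b : ℕ → A) (m : ℕ) : List A :=
  (List.range (m + 1)).map fun j => b (m - j)

/-- An extendable left constraint: a left constraint `A₋ₙ…A₀` which admits a
one-sided past `B` extending it such that `B₋ₘ…B₀` is again a left constraint
for infinitely many `m`. -/
def IsExtendable (X : Set (ℤ → A)) (w : List A) : Prop :=
  IsLeftConstraint X w ∧
  ∃ b : ℕ → A, wordOf b (w.length - 1) = w ∧
    ∀ N : ℕ, ∃ m, N ≤ m ∧ IsLeftConstraint X (wordOf b m)

/-- `𝒞*(X, n)`: the set of extendable left constraints of length `n`. -/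
def ELC (X : Set (ℤ → A)) (n : ℕ) : Set (List A) :=
  { w | w.length = n ∧ IsExtendable X w }

/-- The extendable left constraint entropy `h*_𝒞(X)`. -/
noncomputable def hCstar (X : Set (ℤ → A)) : ℝ :=
  limsup (fun n : ℕ => Real.log (Nat.card ↥(ELC X n)) / (n : ℝ)) atTop

/-- `h*_𝒮𝒞(X) = min (h*_𝒞(X), h*_𝒞(X̄))`. -/
noncomputable def hSCstar (X : Set (ℤ → A)) : ℝ := min (hCstar X) (hCstar (rev X))

/-- Subshift of weak quasi-finite type: `h*_𝒮𝒞(X) < h_top(X)`. -/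
def IsWeakQFT [TopologicalSpace A] (X : Set (ℤ → A)) : Prop :=
  IsSubshift X ∧ hSCstar X < hTop X

/-- Subshift of finite type: defined by excluding a finite set of finite words. -/
def IsSFT (X : Set (ℤ → A)) : Prop :=
  ∃ F : Finset (List A), X = { x | ∀ w ∈ F, ∀ k : ℤ, ¬ OccursAt w x k }

/-- Sofic subshift: the image of an SFT under a continuous shift-commuting map. -/
def IsSofic [TopologicalSpace A] (X : Set (ℤ → A)) : Prop :=
  ∃ (B : Type) (_ : Fintype B) (Y : Set (ℤ → B)) (π : (ℤ → B) → (ℤ → A)),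
    IsSFT Y ∧
    (letI : TopologicalSpace B := ⊥
     Continuous π) ∧
    (∀ x : ℤ → B, π (shift x) = shift (π x)) ∧ π '' Y = X


/-- Topological conjugacy of subshifts: a homeomorphism commuting with the shifts. -/
def Conjugate [TopologicalSpace A] [TopologicalSpace B]
    (X : Set (ℤ → A)) (Y : Set (ℤ → B)) : Prop :=
  ∃ φ : X ≃ₜ Y, ∀ x x' : X, (x' : ℤ → A) = shift (x : ℤ → A) →
    (φ x' : ℤ → B) = shift (φ x : ℤ → B)

/-- The cylinder of a word of length `n` placed at positions `0,…,n-1`. -/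
def cylSet (n : ℕ) (w : Fin n → A) : Set (ℤ → A) :=
  { x | ∀ i : Fin n, x ((i : ℕ) : ℤ) = w i }

/-- Entropy of the partition of `A^ℤ` into cylinders of length `n`. -/
noncomputable def blockEntropy [Fintype A] [MeasurableSpace A]
    (μ : Measure (ℤ → A)) (n : ℕ) : ℝ :=
  ∑ w : Fin n → A, Real.negMulLog ((μ (cylSet n w)).toReal)

/-- Kolmogorov–Sinai entropy of a shift-invariant measure on `A^ℤ`,
computed with the natural (generating) partition into cylinders. -/
noncomputable def KSEntropy [Fintype A] [MeasurableSpace A]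
    (μ : Measure (ℤ → A)) : ℝ :=
  ⨅ n : ℕ, blockEntropy μ (n + 1) / (n + 1)

/-- A maximum measure: an ergodic shift-invariant Borel probability measure
carried by `X` whose Kolmogorov–Sinai entropy equals the topological entropy of `X`. -/
def IsMaxMeasure [Fintype A] [MeasurableSpace A]
    (X : Set (ℤ → A)) (μ : Measure (ℤ → A)) : Prop :=
  IsProbabilityMeasure μ ∧ μ Xᶜ = 0 ∧ Ergodic shift μ ∧ KSEntropy μ = hTop X

/-- The number of points of `X` fixed by the `n`-th power of the shift. -/
noncomputable def perCount (X : Set (ℤ → A)) (n : ℕ) : ℕ :=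
  Nat.card {x : ℤ → A | x ∈ X ∧ shift^[n] x = x}

/-- The (two-sided) shift orbit of a point. -/
def orbit (x : ℤ → A) : Set (ℤ → A) :=
  { y | ∃ n : ℕ, shift^[n] x = y ∨ shift^[n] y = x }

/-- A topologically minimal subshift: nonempty and every orbit is dense. -/
def IsMinimal [TopologicalSpace A] (X : Set (ℤ → A)) : Prop :=
  X.Nonempty ∧ ∀ x ∈ X, X ⊆ closure (orbit x)

/-!
Suppose the subshift has no periodic point. If the same word of length `l` ends at two positions
`k < k + p` of a point, and no left constraint of length in `(l, l + p]` ends at `k + p`, then the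
words of length `l` before `k` and of length `l + p` before `k + p` have the same follower set, so
the block on `[k, k + p)` can be inserted over and over again and a periodic point appears in the
limit. Hence positions free of left constraints of length in `(l, l + q]` have density at most
`#A ^ l / q`.

At each position either infinitely many left constraints end, and they are all extendable, or all
left constraints of length greater than some `i` are absent. By compactness, all but a small
proportion of the positions end an extendable left constraint whose length lies in `(l, N]` for
some uniform `N`. Reading a word from right to left, it is a concatenation of such constraints and
of few single letters. Counting concatenations, with `l` so large that the extendable left
constraints `v` longer than `l` satisfy `∑ exp (-b |v|) ≤ 1/2` for a given `b > h*_𝒞`, shows that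
the topological entropy is at most `h*_𝒞`. Time reversal preserves topological entropy and
periodic points, so it is also at most `h*_𝒞` of the reversed subshift.
-/

section

variable {X : Set (ℤ → A)}

/-! ### Words, follower sets and periodic points -/

/-- The word `x_{k-n} … x_{k-1}` read just before position `k`. Words are indexed by where they
end because the nested words `A₋ₙ…A₀` defining left constraints share their last letter. -/
def pastWord (x : ℤ → A) (k : ℤ) (n : ℕ) : List A :=
  List.ofFn fun i : Fin n => x (k - n + (i : ℕ))

@[simp]
theorem length_pastWord (x : ℤ → A) (k : ℤ) (n : ℕ) : (pastWord x k n).length = n :=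
  List.length_ofFn

@[simp]
theorem getElem_pastWord (x : ℤ → A) (k : ℤ) {n i : ℕ} (hi : i < (pastWord x k n).length) :
    (pastWord x k n)[i] = x (k - n + i) := by
  simp [pastWord]

theorem pastWord_add (x : ℤ → A) (k : ℤ) (m n : ℕ) :
    pastWord x k (m + n) = pastWord x (k - n) m ++ pastWord x k n := by
  simp only [pastWord, List.ofFn_add, Fin.val_castLE, Fin.val_natAdd]
  congr! 4 <;> push_cast <;> ring

theorem pastWord_succ (x : ℤ → A) (k : ℤ) (n : ℕ) :
    pastWord x k (n + 1) = pastWord x (k - 1) n ++ [x (k - 1)] := by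
  rw [pastWord_add]
  simp [pastWord]

theorem tail_pastWord_succ (x : ℤ → A) (k : ℤ) (n : ℕ) :
    (pastWord x k (n + 1)).tail = pastWord x k n := by
  rw [add_comm, pastWord_add]
  simp [pastWord]

theorem pastWord_suffix (x : ℤ → A) (k : ℤ) {m n : ℕ} (hmn : m ≤ n) :
    pastWord x k m <:+ pastWord x k n := by
  obtain ⟨d, rfl⟩ := Nat.exists_eq_add_of_le' hmn
  exact ⟨_, (pastWord_add x k d m).symm⟩

theorem append_eq_pastWord {u v : List A} {x : ℤ → A} {k : ℤ} {n : ℕ}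
    (h : u ++ v = pastWord x k n) : pastWord x (k - v.length) u.length = u := by
  have hn : n = u.length + v.length := by simpa using (congrArg List.length h).symm
  rw [hn, pastWord_add] at h
  exact (List.append_inj_left h (length_pastWord ..).symm).symm

theorem pastWord_comp_add (x : ℤ → A) (s k : ℤ) (n : ℕ) :
    pastWord (fun i => x (i + s)) k n = pastWord x (k + s) n := by
  simp only [pastWord]
  congr! 3
  ring

theorem reverse_pastWord (x : ℤ → A) (k : ℤ) (n : ℕ) :
    (pastWord x k n).reverse = pastWord (fun i => x (-i)) (n + 1 - k) n := by
  refine List.ext_getElem (by simp) fun i hi _ => ?_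
  have hin : i < n := by simpa using hi
  simp only [List.getElem_reverse, getElem_pastWord, length_pastWord]
  congr 1
  omega

theorem wordOf_eq_pastWord (x : ℤ → A) (k : ℤ) (m : ℕ) :
    wordOf (fun j : ℕ => x (k - 1 - j)) m = pastWord x k (m + 1) := by
  refine List.ext_getElem (by simp [wordOf]) fun i hi _ => ?_
  have him : i < m + 1 := by simpa [wordOf] using hi
  simp only [wordOf, List.getElem_map, List.getElem_range, getElem_pastWord]
  congr 1
  omega

theorem isLocallyConstant_pastWord [TopologicalSpace A] [DiscreteTopology A] (k : ℤ) (n : ℕ) :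
    IsLocallyConstant fun x : ℤ → A => pastWord x k n :=
  .comp ((IsLocallyConstant.iff_continuous
    fun (x : ℤ → A) (i : Fin n) => x (k - n + (i : ℕ))).2 (by fun_prop)) List.ofFn

theorem ncard_length_eq (A : Type*) [Finite A] (n : ℕ) :
    {w : List A | w.length = n}.ncard = Nat.card A ^ n := by
  cases nonempty_fintype A
  change Nat.card (List.Vector A n) = _
  rw [Nat.card_eq_fintype_card, card_vector, Nat.card_eq_fintype_card]

theorem comp_add_mem (hX : shift '' X = X) {x : ℤ → A} (hx : x ∈ X) (k : ℤ) :
    (fun i => x (i + k)) ∈ X := by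
  have hsucc : ∀ y ∈ X, (fun i => y (i + 1)) ∈ X := fun y hy => hX ▸ mem_image_of_mem shift hy
  have hpred : ∀ y ∈ X, (fun i => y (i - 1)) ∈ X := by
    intro y hy
    rw [← hX] at hy
    obtain ⟨z, hz, rfl⟩ := hy
    simpa [shift] using hz
  induction k using Int.induction_on with
  | zero => simpa using hx
  | succ n ih => simpa [add_assoc, add_comm (1 : ℤ)] using hsucc _ ih
  | pred n ih => simpa [sub_eq_add_neg, add_assoc, add_comm (-1 : ℤ)] using hpred _ ih

theorem image_shift_eq (hX : ∀ x ∈ X, ∀ k : ℤ, (fun i => x (i + k)) ∈ X) : shift '' X = X :=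
  Subset.antisymm (image_subset_iff.2 fun x hx => hX x hx 1)
    fun x hx => ⟨_, hX x hx (-1), by funext i; simp [shift]⟩

theorem mem_Lang_iff (hX : shift '' X = X) (k : ℤ) {n : ℕ} {w : List A} :
    w ∈ Lang X n ↔ ∃ x ∈ X, pastWord x k n = w := by
  have occursAt_iff : ∀ x : ℤ → A, (w.length = n ∧ OccursAt w x 0) ↔ pastWord x n n = w := by
    intro x
    constructor
    · rintro ⟨rfl, hw⟩
      refine List.ext_getElem (by simp) fun i _ hi => ?_
      simpa using hw ⟨i, hi⟩
    · rintro rfl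
      exact ⟨by simp, fun i => by simp⟩
  constructor
  · rintro ⟨hlen, x, hx, hw⟩
    refine ⟨fun i => x (i + (n - k)), comp_add_mem hX hx _, ?_⟩
    rw [pastWord_comp_add, add_sub_cancel]
    exact (occursAt_iff x).1 ⟨hlen, hw⟩
  · rintro ⟨x, hx, hw⟩
    have hw' := (occursAt_iff fun i => x (i + (k - n))).2
      (by rwa [pastWord_comp_add, add_sub_cancel])
    exact ⟨hw'.1, _, comp_add_mem hX hx _, hw'.2⟩

theorem isPeriodicPt_shift_iff {n : ℕ} {x : ℤ → A} :
    Function.IsPeriodicPt shift n x ↔ Function.Periodic x (n : ℤ) := by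
  have iterate_shift : shift^[n] x = fun i => x (i + n) := by
    induction n with
    | zero => simp
    | succ n ih =>
      rw [Function.iterate_succ_apply', ih]
      funext i
      simp [shift, add_assoc, add_comm (1 : ℤ)]
  rw [Function.IsPeriodicPt, Function.IsFixedPt, iterate_shift, funext_iff]
  rfl

theorem mem_fol_pastWord (hX : shift '' X = X) {x : ℤ → A} {k : ℤ} {n : ℕ} {y : ℕ → A} :
    y ∈ fol X (pastWord x k n) ↔
      ∃ z ∈ X, EqOn z x (Ico (k - n) k) ∧ ∀ j : ℕ, y j = z (k - 1 + j) := by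
  constructor
  · rintro ⟨z, hz, hzx, hy⟩
    refine ⟨fun i => z (i + (n - k)), comp_add_mem hX hz _, fun i hi => ?_, fun j => ?_⟩
    · obtain ⟨d, hd⟩ := Int.eq_ofNat_of_zero_le (sub_nonneg.2 hi.1)
      have hdn : d < n := by have := hi.2; omega
      have hd' : z d = x (k - n + d) := by simpa using hzx ⟨d, by simpa using hdn⟩
      rwa [← hd, add_sub_cancel, sub_sub_eq_add_sub, add_sub_assoc] at hd'
    · rw [hy, length_pastWord]
      ring_nf
  · rintro ⟨z, hz, hzx, hy⟩
    refine ⟨fun i => z (i + (k - n)), comp_add_mem hX hz _, fun i => ?_, fun j => ?_⟩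
    · have hi : (i : ℕ) < n := by simpa using i.2
      rw [List.get_eq_getElem, getElem_pastWord, add_comm]
      exact hzx ⟨by omega, by omega⟩
    · rw [hy, length_pastWord]
      ring_nf

theorem fol_pastWord_nonempty (hX : shift '' X = X) {x : ℤ → A} (hx : x ∈ X)
    (k : ℤ) (n : ℕ) : (fol X (pastWord x k n)).Nonempty :=
  ⟨fun j => x (k - 1 + j), (mem_fol_pastWord hX).2 ⟨x, hx, fun _ _ => rfl, fun _ => rfl⟩⟩

theorem antitone_fol_pastWord (hX : shift '' X = X) (x : ℤ → A) (k : ℤ) :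
    Antitone fun n => fol X (pastWord x k n) := by
  intro m n hmn y hy
  obtain ⟨z, hz, hzx, hy⟩ := (mem_fol_pastWord hX).1 hy
  exact (mem_fol_pastWord hX).2 ⟨z, hz, hzx.mono (Ico_subset_Ico_left (by omega)), hy⟩

theorem isLeftConstraint_pastWord_succ_iff (hX : shift '' X = X) {x : ℤ → A}
    (hx : x ∈ X) {k : ℤ} {n : ℕ} :
    IsLeftConstraint X (pastWord x k (n + 1)) ↔
      fol X (pastWord x k (n + 1)) ≠ fol X (pastWord x k n) := by
  rw [IsLeftConstraint, tail_pastWord_succ]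
  refine ⟨fun h => h.2.2.ne, fun h => ⟨?_, (fol_pastWord_nonempty hX hx k _).ne_empty,
    (antitone_fol_pastWord hX x k n.le_succ).ssubset_of_ne h⟩⟩
  exact List.ne_nil_of_length_pos (by simp)

/-- No left constraint of length in `(l, l + q]` ends just before position `k` of `x`. -/
def IsConstraintFree (X : Set (ℤ → A)) (l q : ℕ) (x : ℤ → A) (k : ℤ) : Prop :=
  ∀ m ∈ Ioc l (l + q), ¬ IsLeftConstraint X (pastWord x k m)

theorem IsConstraintFree.mono {l p q : ℕ} {x : ℤ → A} {k : ℤ}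
    (h : IsConstraintFree X l q x k) (hpq : p ≤ q) : IsConstraintFree X l p x k :=
  fun m hm => h m (Ioc_subset_Ioc_right (by omega) hm)

theorem IsConstraintFree.fol_pastWord_add (hX : shift '' X = X) {x : ℤ → A}
    (hx : x ∈ X) {k : ℤ} {l q : ℕ} (h : IsConstraintFree X l q x k) :
    fol X (pastWord x k (l + q)) = fol X (pastWord x k l) := by
  induction q with
  | zero => rfl
  | succ q ih =>
    rw [← ih (h.mono q.le_succ)]
    exact not_not.1 ((isLeftConstraint_pastWord_succ_iff hX hx).not.1
      (h (l + q + 1) ⟨by omega, by omega⟩))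

theorem mem_of_forall_exists_eqOn_Ico [TopologicalSpace A] (hX : IsClosed X) {x : ℤ → A}
    (h : ∀ n : ℕ, ∃ z ∈ X, EqOn z x (Ico (-n) n)) : x ∈ X := by
  choose z hz hzx using h
  refine hX.mem_of_tendsto (f := z) (b := atTop) ?_ (Eventually.of_forall hz)
  refine tendsto_pi_nhds.2 fun i => tendsto_const_nhds.congr' ?_
  filter_upwards [eventually_gt_atTop i.natAbs] with n hn
  exact (hzx n ⟨by omega, by omega⟩).symm

theorem inter_periodicPts_nonempty_of_repetitions [TopologicalSpace A] (hX : IsSubshift X)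
    {p : ℕ} (hp : 0 < p) (w : ℕ → A)
    (h : ∀ n : ℕ, ∃ z ∈ X, ∃ k : ℤ, ∀ i < n * p, z (k + (i : ℕ)) = w (i % p)) :
    (X ∩ Function.periodicPts shift).Nonempty := by
  refine ⟨fun i => w (i % p).toNat, mem_of_forall_exists_eqOn_Ico hX.1 fun n => ?_, p, hp,
    isPeriodicPt_shift_iff.2 fun i => by simp⟩
  obtain ⟨z, hz, k, hzw⟩ := h (2 * n)
  refine ⟨fun i => z (i + (k + n * p)), comp_add_mem hX.2 hz _, fun i hi => ?_⟩
  obtain ⟨j, hj⟩ : ∃ j : ℕ, i + n * p = j := Int.eq_ofNat_of_zero_le (by nlinarith [hi.1])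
  have hjn : j < 2 * n * p := by zify; nlinarith [hi.2]
  have hmod : i % p = (j % p : ℕ) := by
    rw [Int.natCast_mod, ← hj, Int.add_mul_emod_self_right]
  simp only [hmod, Int.toNat_natCast, ← hzw j hjn, ← hj]
  ring_nf

theorem inter_periodicPts_nonempty_of_pastWord_eq [TopologicalSpace A]
    (hX : IsSubshift X) {x : ℤ → A} (hx : x ∈ X) {k : ℤ} {l p : ℕ} (hp : 0 < p)
    (hw : pastWord x k l = pastWord x (k + p) l) (hfree : IsConstraintFree X l p x (k + p)) :
    (X ∩ Function.periodicPts shift).Nonempty := by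
  refine inter_periodicPts_nonempty_of_repetitions hX hp (fun i => x (k + i)) fun n => ?_
  suffices ∃ z ∈ X, EqOn z x (Ico (k - l) k) ∧ ∀ i < n * p, z (k + (i : ℕ)) = x (k + (i % p : ℕ)) by
    obtain ⟨z, hz, -, hzx⟩ := this
    exact ⟨z, hz, k, hzx⟩
  induction n with
  | zero => exact ⟨x, hx, fun _ _ => rfl, by simp⟩
  | succ n ih =>
    obtain ⟨z, hz, hpast, hfut⟩ := ih
    -- The follower sets before `k` and before `k + p` agree, so a copy of `x` on `[k, k + p)`
    -- can be inserted to the left of the future of `z`.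
    have hz_fol : (fun j : ℕ => z (k - 1 + j)) ∈ fol X (pastWord x (k + p) (l + p)) := by
      rw [hfree.fol_pastWord_add hX.2 hx, ← hw, mem_fol_pastWord hX.2]
      exact ⟨z, hz, hpast, fun _ => rfl⟩
    obtain ⟨y, hy, hyx, hyz⟩ := (mem_fol_pastWord hX.2).1 hz_fol
    refine ⟨y, hy, hyx.mono (Ico_subset_Ico (by push_cast; omega) (by omega)), fun i hi => ?_⟩
    rcases lt_or_ge i p with hip | hpi
    · rw [Nat.mod_eq_of_lt hip]
      exact hyx ⟨by push_cast; omega, by omega⟩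
    · obtain ⟨j, rfl⟩ := Nat.exists_eq_add_of_le hpi
      have hyj : z (k + j) = y (k + (p + j : ℕ)) := by
        convert hyz (j + 1) using 2 <;> push_cast <;> ring
      rw [← hyj, hfut j (by linarith [Nat.succ_mul n p]), Nat.add_mod_left]

open Classical in
theorem count_isConstraintFree_le [Finite A] [TopologicalSpace A]
    (hX : IsSubshift X) (hper : ¬ (X ∩ Function.periodicPts shift).Nonempty) {x : ℤ → A}
    (hx : x ∈ X) (s : ℤ) (l n : ℕ) {q : ℕ} (hq : 0 < q) :
    Nat.count (fun k => IsConstraintFree X l q x (s + k)) n ≤ (n / q + 1) * Nat.card A ^ l := by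
  have pastWord_ne : ∀ k k' : ℕ, IsConstraintFree X l q x (s + k') → k < k' → k / q = k' / q →
      pastWord x (s + k) l ≠ pastWord x (s + k') l := by
    intro k k' hfree hkk' hdiv hw
    obtain ⟨p, rfl⟩ := Nat.exists_eq_add_of_lt hkk'
    have hpq : p + 1 ≤ q := by
      have := Nat.div_add_mod k q
      have := Nat.div_add_mod (k + p + 1) q
      have := Nat.mod_lt (k + p + 1) hq
      rw [← hdiv] at *
      omega
    rw [show s + ((k + p + 1 : ℕ) : ℤ) = s + k + (p + 1 : ℕ) by push_cast; ring] at hfree hw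
    exact hper (inter_periodicPts_nonempty_of_pastWord_eq hX hx p.succ_pos hw (hfree.mono hpq))
  have hfin := List.finite_length_eq A l
  calc Nat.count (fun k => IsConstraintFree X l q x (s + k)) n
      = ((Finset.range n).filter fun k : ℕ => IsConstraintFree X l q x (s + k)).card :=
        Nat.count_eq_card_filter_range ..
    _ ≤ (Finset.range (n / q + 1) ×ˢ hfin.toFinset).card := by
        refine Finset.card_le_card_of_injOn (fun k => (k / q, pastWord x (s + k) l))
          (fun k hk => ?_) fun k hk k' hk' hkk' => ?_
        · have hkn : k < n := by simpa using (Finset.mem_filter.1 hk).1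
          simpa [Nat.lt_succ_iff] using Nat.div_le_div_right hkn.le
        · obtain ⟨hdiv, hw⟩ := Prod.ext_iff.1 hkk'
          rcases lt_trichotomy k k' with hlt | heq | hgt
          · exact (pastWord_ne k k' (Finset.mem_filter.1 hk').2 hlt hdiv hw).elim
          · exact heq
          · exact (pastWord_ne k' k (Finset.mem_filter.1 hk).2 hgt hdiv.symm hw.symm).elim
    _ = (n / q + 1) * Nat.card A ^ l := by
        rw [Finset.card_product, Finset.card_range, ← ncard_eq_toFinset_card _ hfin,
          ncard_length_eq]

/-! ### Concatenations of words -/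

/-- `w` is a concatenation of words of `E` and of at most `j` single letters. -/
inductive IsConcat (E : Finset (List A)) : ℕ → List A → Prop
  | nil (j : ℕ) : IsConcat E j []
  | block {j : ℕ} {u v : List A} : IsConcat E j u → v ∈ E → IsConcat E j (u ++ v)
  | letter {j : ℕ} {u : List A} (a : A) : IsConcat E j u → IsConcat E (j + 1) (u ++ [a])

theorem IsConcat.mono {E : Finset (List A)} {i j : ℕ} {w : List A} (h : IsConcat E i w)
    (hij : i ≤ j) : IsConcat E j w := by
  induction h generalizing j with
  | nil => exact .nil j
  | block _ hv ih => exact .block (ih hij) hv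
  | letter a _ ih =>
    obtain ⟨j, rfl⟩ := Nat.exists_eq_succ_of_ne_zero (Nat.ne_zero_of_lt hij)
    exact .letter a (ih (Nat.succ_le_succ_iff.1 hij))

theorem isConcat_pastWord {E : Finset (List A)} (hE : [] ∉ E) (x : ℤ → A) (p : ℕ → Prop)
    [DecidablePred p]
    (hp : ∀ k : ℕ, ¬ p k → ∃ v ∈ E, v <:+ pastWord x ((k + 1 : ℕ) : ℤ) (k + 1)) (n : ℕ) :
    IsConcat E (Nat.count p n) (pastWord x n n) := by
  induction n using Nat.strong_induction_on with
  | _ n ih =>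
  rcases n with - | n
  · exact .nil _
  by_cases hpn : p n
  · rw [pastWord_succ, Nat.count_succ, if_pos hpn, Nat.cast_add_one, add_sub_cancel_right]
    exact .letter _ (ih n n.lt_succ_self)
  · obtain ⟨v, hv, u, huv⟩ := hp n hpn
    have hlen : u.length + v.length = n + 1 := by simpa using congrArg List.length huv
    have hvpos : 0 < v.length := List.length_pos_iff.2 fun h => hE (h ▸ hv)
    have hu : pastWord x u.length u.length = u := by
      rw [show (u.length : ℤ) = ((n + 1 : ℕ) : ℤ) - v.length by omega]
      exact append_eq_pastWord huv
    rw [← huv, ← hu]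
    exact .block ((ih _ (by omega)).mono (Nat.count_monotone p (by omega))) hv

/-- The words of length `n` that are concatenations of words of `E` and of at most `j` letters. -/
def concats (E : Finset (List A)) (j n : ℕ) : Set (List A) :=
  {w | w.length = n ∧ IsConcat E j w}

theorem finite_concats [Finite A] (E : Finset (List A)) (j n : ℕ) : (concats E j n).Finite :=
  (List.finite_length_eq A n).subset fun _ hw => hw.1

theorem concats_succ (E : Finset (List A)) (j n : ℕ) :
    concats E j (n + 1) =
      (⋃ v ∈ E.filter (·.length ≤ n + 1), (· ++ v) '' concats E j (n + 1 - v.length)) ∪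
        ⋃ i ∈ {i | i + 1 = j}, image2 (fun u a => u ++ [a]) (concats E i n) univ := by
  refine Subset.antisymm ?_ (union_subset (iUnion₂_subset ?_) (iUnion₂_subset ?_))
  · rintro w ⟨hlen, hw⟩
    cases hw with
    | nil => simp at hlen
    | @block _ u v hu hv =>
      rw [List.length_append] at hlen
      exact .inl (mem_biUnion (Finset.mem_filter.2 ⟨hv, by omega⟩) ⟨u, ⟨by omega, hu⟩, rfl⟩)
    | @letter i u a hu =>
      exact .inr (mem_biUnion (x := i) rfl
        ⟨u, ⟨by simpa using hlen, hu⟩, a, mem_univ a, rfl⟩)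
  · rintro v hv _ ⟨u, ⟨hlen, hu⟩, rfl⟩
    obtain ⟨hvE, hvn⟩ := Finset.mem_filter.1 hv
    exact ⟨by rw [List.length_append]; omega, hu.block hvE⟩
  · rintro i rfl _ ⟨u, ⟨hlen, hu⟩, a, -, rfl⟩
    exact ⟨by simpa using hlen, hu.letter a⟩

theorem ncard_biUnion_append_mul_pow_le (E : Finset (List A)) {r c : ℝ} (hr : 0 ≤ r)
    (hE : ∑ v ∈ E, r ^ v.length ≤ 1 / 2) (hc : 0 ≤ c) (T : ℕ → Set (List A))
    (hT : ∀ n, (T n).Finite) {n : ℕ}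
    (h : ∀ v ∈ E, v.length ≤ n → ((T (n - v.length)).ncard : ℝ) * r ^ (n - v.length) ≤ c) :
    ((⋃ v ∈ E.filter (·.length ≤ n), (· ++ v) '' T (n - v.length)).ncard : ℝ) * r ^ n ≤ c / 2 := by
  have hcard : (⋃ v ∈ E.filter (·.length ≤ n), (· ++ v) '' T (n - v.length)).ncard ≤
      ∑ v ∈ E.filter (·.length ≤ n), (T (n - v.length)).ncard :=
    (Finset.set_ncard_biUnion_le _ _).trans
      (Finset.sum_le_sum fun v _ => ncard_image_le (hT _))
  calc _ ≤ ((∑ v ∈ E.filter (·.length ≤ n), (T (n - v.length)).ncard : ℕ) : ℝ) * r ^ n := by gcongr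
    _ = ∑ v ∈ E.filter (·.length ≤ n),
          (T (n - v.length)).ncard * r ^ (n - v.length) * r ^ v.length := by
        rw [Nat.cast_sum, Finset.sum_mul]
        refine Finset.sum_congr rfl fun v hv => ?_
        rw [mul_assoc, ← pow_add, Nat.sub_add_cancel (Finset.mem_filter.1 hv).2]
    _ ≤ ∑ v ∈ E.filter (·.length ≤ n), c * r ^ v.length := by
        gcongr with v hv
        exact h v (Finset.mem_filter.1 hv).1 (Finset.mem_filter.1 hv).2
    _ ≤ ∑ v ∈ E, c * r ^ v.length :=
        Finset.sum_le_sum_of_subset_of_nonneg (E.filter_subset _) fun _ _ _ => by positivity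
    _ ≤ c / 2 := by
        rw [← Finset.mul_sum]
        linarith [mul_le_mul_of_nonneg_left hE hc]

theorem ncard_append_singleton_mul_pow_le [Finite A] {r c : ℝ} (hr : 0 ≤ r) (hr1 : r ≤ 1)
    {T : Set (List A)} (hT : T.Finite) {n : ℕ} (h : (T.ncard : ℝ) * r ^ n ≤ c) :
    ((image2 (fun u (a : A) => u ++ [a]) T univ).ncard : ℝ) * r ^ (n + 1) ≤ Nat.card A * c := by
  have hcard : (image2 (fun u (a : A) => u ++ [a]) T univ).ncard ≤ Nat.card A * T.ncard := by
    rw [← image_prod, mul_comm, ← ncard_univ, ← ncard_prod]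
    exact ncard_image_le (hT.prod finite_univ)
  calc _ ≤ (Nat.card A * T.ncard : ℝ) * r ^ n :=
        mul_le_mul (mod_cast hcard) (pow_le_pow_of_le_one hr hr1 n.le_succ) (by positivity)
          (by positivity)
    _ ≤ Nat.card A * c := by rw [mul_assoc]; gcongr

theorem ncard_concats_mul_pow_le [Finite A] [Nonempty A] {E : Finset (List A)} {r : ℝ}
    (hr : 0 ≤ r) (hr1 : r ≤ 1) (hE : ∑ v ∈ E, r ^ v.length ≤ 1 / 2) (j n : ℕ) :
    ((concats E j n).ncard : ℝ) * r ^ n ≤ (2 * Nat.card A) ^ j := by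
  have hA : (1 : ℝ) ≤ Nat.card A := mod_cast Nat.card_pos
  have hnil : [] ∉ E := fun h => by
    have := (Finset.single_le_sum (fun v _ => pow_nonneg hr v.length) h).trans hE
    norm_num at this
  induction n using Nat.strong_induction_on generalizing j with
  | _ n ih =>
  rcases n with - | n
  · have hcard : (concats E j 0).ncard ≤ 1 := by
      rw [← ncard_singleton ([] : List A)]
      exact ncard_le_ncard fun w hw => List.length_eq_zero_iff.1 hw.1
    calc ((concats E j 0).ncard : ℝ) * r ^ 0 ≤ 1 := by simpa using hcard
      _ ≤ (2 * Nat.card A) ^ j := one_le_pow₀ (by linarith)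
  have hblock := ncard_biUnion_append_mul_pow_le E hr hE (c := (2 * Nat.card A) ^ j)
    (by positivity) (concats E j) (finite_concats E j) (n := n + 1) fun v hv hvn => ih _
      (by have := List.length_pos_iff.2 fun h => hnil (h ▸ hv); omega) j
  have hletter : ((⋃ i ∈ {i | i + 1 = j}, image2 (fun u (a : A) => u ++ [a])
      (concats E i n) univ).ncard : ℝ) * r ^ (n + 1) ≤ (2 * Nat.card A) ^ j / 2 := by
    rcases j with - | j
    · simp
    · have := ncard_append_singleton_mul_pow_le hr hr1 (finite_concats E j n)
        (ih n n.lt_succ_self j)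
      simp only [Nat.add_right_cancel_iff, ofPred_eq_eq_singleton, biUnion_singleton]
      exact this.trans_eq (by ring)
  have hcard := (congrArg ncard (concats_succ E j n)).trans_le (ncard_union_le _ _)
  calc ((concats E j (n + 1)).ncard : ℝ) * r ^ (n + 1) ≤ _ :=
        mul_le_mul_of_nonneg_right (Nat.cast_le.2 hcard) (by positivity)
    _ ≤ (2 * Nat.card A) ^ j := by push_cast; linarith

/-! ### Exponential growth rates -/

/-- Exponential growth rate `limsup (1/n) log c_n`; the entropies `hTop` and `hCstar` are of this
form. -/
noncomputable def logGrowth (c : ℕ → ℕ) : ℝ :=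
  limsup (fun n : ℕ => Real.log (c n) / n) atTop

theorem isBoundedUnder_log_div {c : ℕ → ℕ} {d : ℕ} (hc : ∀ n, c n ≤ d ^ n) :
    IsBoundedUnder (· ≤ ·) atTop fun n : ℕ => Real.log (c n) / n := by
  refine isBoundedUnder_of ⟨Real.log d, fun n => div_le_of_le_mul₀ (by positivity)
    (by positivity) ?_⟩
  rcases (c n).eq_zero_or_pos with h | h
  · rw [h, Nat.cast_zero, Real.log_zero]
    positivity
  · rw [mul_comm, ← Real.log_pow]
    exact Real.log_le_log (mod_cast h) (mod_cast hc n)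

theorem logGrowth_nonneg {c : ℕ → ℕ} {d : ℕ} (hc : ∀ n, c n ≤ d ^ n) : 0 ≤ logGrowth c :=
  le_limsup_of_frequently_le (.of_forall fun n => by positivity)
    (isBoundedUnder_log_div hc)

theorem logGrowth_le {c : ℕ → ℕ} {b C : ℝ} (hb : 0 ≤ b) (hC : 1 ≤ C)
    (h : ∀ n, c n ≤ C * Real.exp (b * n)) : logGrowth c ≤ b := by
  have hle : ∀ n : ℕ, Real.log (c n) / n ≤ Real.log C / n + b := by
    intro n
    have hlogC : 0 ≤ Real.log C / n := div_nonneg (Real.log_nonneg hC) n.cast_nonneg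
    rcases n.eq_zero_or_pos with rfl | hn
    · simpa using hb
    rcases (c n).eq_zero_or_pos with h0 | hpos
    · rw [h0, Nat.cast_zero, Real.log_zero, zero_div]
      positivity
    have hlog : Real.log (c n) ≤ Real.log C + b * n := by
      rw [← Real.log_exp (b * n), ← Real.log_mul (by positivity) (by positivity)]
      exact Real.log_le_log (mod_cast hpos) (h n)
    rw [← mul_div_cancel_right₀ b (Nat.cast_ne_zero.2 hn.ne'), ← add_div]
    gcongr
  have hlim : Tendsto (fun n : ℕ => Real.log C / n + b) atTop (nhds b) := by
    simpa using (tendsto_const_div_atTop_nhds_zero_nat (Real.log C)).add_const b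
  rw [← hlim.limsup_eq]
  exact limsup_le_limsup (.of_forall hle)
    (isBoundedUnder_of ⟨0, fun n => by positivity⟩).isCoboundedUnder_le
    hlim.isBoundedUnder_le

theorem summable_mul_exp_pow_of_logGrowth_lt {c : ℕ → ℕ} {d : ℕ} (hc : ∀ n, c n ≤ d ^ n) {b : ℝ}
    (h : logGrowth c < b) : Summable fun n => c n * Real.exp (-b) ^ n := by
  obtain ⟨a, hca, hab⟩ := exists_between h
  refine .of_norm_bounded_eventually_nat (g := fun n => Real.exp (a - b) ^ n)
    (summable_geometric_of_lt_one (Real.exp_pos _).le (Real.exp_lt_one_iff.2 (sub_neg.2 hab))) ?_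
  filter_upwards [eventually_lt_of_limsup_lt hca (isBoundedUnder_log_div hc), eventually_gt_atTop 0]
    with n hn hpos
  rw [div_lt_iff₀ (mod_cast hpos)] at hn
  have hcn : (c n : ℝ) ≤ Real.exp (a * n) := Real.le_exp_of_log_le hn.le
  rw [Real.norm_of_nonneg (by positivity), sub_eq_add_neg, Real.exp_add, mul_pow,
    ← Real.exp_nat_mul a, mul_comm (n : ℝ)]
  gcongr

theorem ncard_length_and_le [Finite A] (P : List A → Prop) (n : ℕ) :
    {w | w.length = n ∧ P w}.ncard ≤ Nat.card A ^ n :=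
  (ncard_le_ncard (fun _ hw => hw.1) (List.finite_length_eq A n)).trans_eq (ncard_length_eq A n)

theorem hCstar_nonneg [Finite A] (X : Set (ℤ → A)) : 0 ≤ hCstar X :=
  logGrowth_nonneg (ncard_length_and_le (IsExtendable X))

theorem hTop_nonpos_of_finite (hX : shift '' X = X) (hfin : X.Finite) : hTop X ≤ 0 := by
  refine logGrowth_le (C := X.ncard + 1) le_rfl (by simp) fun n => ?_
  have hcard : (Lang X n).ncard ≤ X.ncard := by
    refine (ncard_le_ncard (fun w hw => ?_) (hfin.image _)).trans
      (ncard_image_le (f := fun x => pastWord x 0 n) hfin)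
    exact (mem_Lang_iff hX 0).1 hw
  rw [zero_mul, Real.exp_zero, mul_one]
  exact_mod_cast hcard.trans (Nat.le_succ _)

theorem exists_forall_sum_exp_pow_le_half [Finite A] {b : ℝ}
    (hb : hCstar X < b) : ∃ l : ℕ, ∀ E : Finset (List A),
      (∀ v ∈ E, l < v.length ∧ IsExtendable X v) →
        ∑ v ∈ E, Real.exp (-b) ^ v.length ≤ 1 / 2 := by
  have hsum : Summable fun n => ((ELC X n).ncard : ℝ) * Real.exp (-b) ^ n :=
    summable_mul_exp_pow_of_logGrowth_lt (ncard_length_and_le (IsExtendable X)) hb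
  obtain ⟨s, hs⟩ := summable_iff_vanishing_norm.1 hsum (1 / 2) (by norm_num)
  obtain ⟨l, hl⟩ := s.exists_nat_subset_range
  refine ⟨l, fun E hE => ?_⟩
  have hdisj : Disjoint (E.image List.length) s := by
    refine Finset.disjoint_left.2 fun n hn hns => ?_
    obtain ⟨v, hv, rfl⟩ := Finset.mem_image.1 hn
    exact (Finset.mem_range.1 (hl hns)).not_gt (hE v hv).1
  calc ∑ v ∈ E, Real.exp (-b) ^ v.length
      = ∑ n ∈ E.image List.length, (E.filter (·.length = n)).card * Real.exp (-b) ^ n := by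
        rw [Finset.sum_comp (fun n => Real.exp (-b) ^ n) List.length]
        simp
    _ ≤ ∑ n ∈ E.image List.length, (ELC X n).ncard * Real.exp (-b) ^ n := by
        gcongr with n
        rw [← ncard_coe_finset]
        refine ncard_le_ncard (fun v hv => ?_)
          ((List.finite_length_eq A n).subset fun _ hw => hw.1)
        obtain ⟨hvE, hvn⟩ := Finset.mem_filter.1 hv
        exact ⟨hvn, (hE v hvE).2⟩
    _ ≤ 1 / 2 := (Real.le_norm_self _).trans (hs _ hdisj).le

/-! ### Factoring words into extendable constraints -/

theorem isExtendable_pastWord {x : ℤ → A} {k : ℤ} {m : ℕ} (hm : IsLeftConstraint X (pastWord x k m))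
    (hinf : ∀ n, ∃ i > n, IsLeftConstraint X (pastWord x k i)) :
    IsExtendable X (pastWord x k m) := by
  have hpos : 0 < m := by simpa using List.length_pos_iff.2 hm.1
  refine ⟨hm, fun j => x (k - 1 - j), ?_, fun n => ?_⟩
  · rw [wordOf_eq_pastWord, length_pastWord, Nat.sub_add_cancel hpos]
  · obtain ⟨i, hni, hi⟩ := hinf n
    refine ⟨i - 1, Nat.le_sub_one_of_lt hni, ?_⟩
    rwa [wordOf_eq_pastWord, Nat.sub_add_cancel (Nat.zero_lt_of_lt hni)]

theorem exists_isExtendable_or_isConstraintFree (X : Set (ℤ → A)) (x : ℤ → A) (k : ℤ) (l : ℕ)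
    (q : ℕ → ℕ) :
    (∃ m > l, IsExtendable X (pastWord x k m)) ∨ ∃ i, IsConstraintFree X i (q i) x k := by
  by_cases hinf : ∀ n, ∃ m > n, IsLeftConstraint X (pastWord x k m)
  · obtain ⟨m, hlm, hm⟩ := hinf l
    exact .inl ⟨m, hlm, isExtendable_pastWord hm hinf⟩
  · push Not at hinf
    obtain ⟨i, hi⟩ := hinf
    exact .inr ⟨i, fun m hm => hi m hm.1⟩

theorem isOpen_setOf_isConstraintFree [TopologicalSpace A] [DiscreteTopology A]
    (X : Set (ℤ → A)) (l q : ℕ) (k : ℤ) : IsOpen {x | IsConstraintFree X l q x k} := by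
  have : {x | IsConstraintFree X l q x k} =
      ⋂ m ∈ Ioc l (l + q), (pastWord · k m) ⁻¹' {w | ¬ IsLeftConstraint X w} := by
    ext x
    simp [IsConstraintFree]
  rw [this]
  exact (finite_Ioc _ _).isOpen_biInter fun m _ => isLocallyConstant_pastWord k m _

theorem exists_bound_isExtendable_or_isConstraintFree [Finite A] [TopologicalSpace A]
    [DiscreteTopology A] (hX : IsSubshift X) (l : ℕ) (q : ℕ → ℕ) :
    ∃ N, ∀ x ∈ X, ∀ k, (∃ m ∈ Ioc l N, IsExtendable X (pastWord x k m)) ∨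
      ∃ i < N, IsConstraintFree X i (q i) x k := by
  let U : ℕ → Set (ℤ → A) := fun N =>
    (⋃ m ∈ Ioc l N, (pastWord · 0 m) ⁻¹' {w | IsExtendable X w}) ∪
      ⋃ i < N, {x | IsConstraintFree X i (q i) x 0}
  have hU : ∀ N, IsOpen (U N) := fun N =>
    (isOpen_biUnion fun m _ => isLocallyConstant_pastWord 0 m _).union
      (isOpen_biUnion fun i _ => isOpen_setOf_isConstraintFree X i (q i) 0)
  have hmono : Monotone U := fun M N hMN => union_subset_union
    (biUnion_subset_biUnion_left (Ioc_subset_Ioc_right hMN))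
    (biUnion_subset_biUnion_left fun i (hi : i < M) => hi.trans_le hMN)
  have hcover : X ⊆ ⋃ N, U N := by
    intro x _
    rw [mem_iUnion]
    rcases exists_isExtendable_or_isConstraintFree X x 0 l q with ⟨m, hlm, hm⟩ | ⟨i, hi⟩
    · exact ⟨m, .inl (mem_biUnion (x := m) ⟨hlm, le_rfl⟩ hm)⟩
    · exact ⟨i + 1, .inr (mem_biUnion (x := i) i.lt_succ_self hi)⟩
  obtain ⟨N, hN⟩ := hX.1.isCompact.elim_directed_cover U hU hcover hmono.directed_le
  refine ⟨N, fun x hx k => ?_⟩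
  simpa [U, IsConstraintFree, pastWord_comp_add] using hN (comp_add_mem hX.2 hx k)

open Classical in
theorem exists_forall_count_isConstraintFree_le [Finite A] [TopologicalSpace A]
    (hX : IsSubshift X) (hper : ¬ (X ∩ Function.periodicPts shift).Nonempty)
    (l : ℕ) {δ : ℝ} (hδ : 0 < δ) :
    ∃ q, ∀ x ∈ X, ∀ (s : ℤ) (n : ℕ),
      (Nat.count (fun k => IsConstraintFree X l q x (s + k)) n : ℝ) ≤
        δ * n + (Nat.card A ^ l : ℕ) := by
  obtain ⟨q, hq⟩ := exists_nat_gt ((Nat.card A ^ l : ℕ) / δ)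
  have hq0 : (0 : ℝ) < q := hq.trans_le' (by positivity)
  refine ⟨q, fun x hx s n => ?_⟩
  calc (Nat.count (fun k => IsConstraintFree X l q x (s + k)) n : ℝ)
      ≤ ((n / q + 1) * Nat.card A ^ l : ℕ) :=
        mod_cast count_isConstraintFree_le hX hper hx s l n (mod_cast hq0)
    _ ≤ (n / q + 1) * (Nat.card A ^ l : ℕ) := by
        push_cast
        gcongr
        exact Nat.cast_div_le
    _ = (Nat.card A ^ l : ℕ) / q * n + (Nat.card A ^ l : ℕ) := by ring
    _ ≤ δ * n + (Nat.card A ^ l : ℕ) := by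
        gcongr
        rw [div_le_comm₀ hq0 hδ]
        exact hq.le

open Classical in
theorem count_lt_or_exists_lt_le (M n : ℕ) (p : ℕ → ℕ → Prop) :
    Nat.count (fun k => k < M ∨ ∃ i < M, p i k) n ≤
      M + ∑ i ∈ Finset.range M, Nat.count (p i) n := by
  simp only [Nat.count_eq_card_filter_range]
  calc _ ≤ (Finset.range M ∪
        (Finset.range M).biUnion fun i => (Finset.range n).filter (p i)).card :=
        Finset.card_le_card fun k hk => by
          simp only [Finset.mem_union, Finset.mem_biUnion, Finset.mem_filter, Finset.mem_range] at *
          grind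
    _ ≤ _ := (Finset.card_union_le _ _).trans
      (add_le_add (Finset.card_range M).le Finset.card_biUnion_le)

theorem exists_isConcat_pastWord [Finite A] [TopologicalSpace A] [DiscreteTopology A]
    (hX : IsSubshift X) (hper : ¬ (X ∩ Function.periodicPts shift).Nonempty)
    (l : ℕ) {ε : ℝ} (hε : 0 < ε) :
    ∃ (E : Finset (List A)) (C : ℕ), (∀ v ∈ E, l < v.length ∧ IsExtendable X v) ∧
      ∀ x ∈ X, ∀ n : ℕ, ∃ j : ℕ, j ≤ ε * n + C ∧ IsConcat E j (pastWord x n n) := by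
  classical
  -- Budgets decaying geometrically in the level `i` keep the total below `ε`, whatever `N` is.
  choose q hq using fun i : ℕ => exists_forall_count_isConstraintFree_le hX hper i
    (show 0 < ε / 2 * (1 / 2) ^ i by positivity)
  obtain ⟨N, hN⟩ := exists_bound_isExtendable_or_isConstraintFree hX l q
  have hfin : {v : List A | v.length ≤ N ∧ l < v.length ∧ IsExtendable X v}.Finite :=
    (List.finite_length_le A N).subset fun _ hv => hv.1
  refine ⟨hfin.toFinset, N + ∑ i ∈ Finset.range N, Nat.card A ^ i,
    fun v hv => (hfin.mem_toFinset.1 hv).2, fun x hx n => ?_⟩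
  refine ⟨_, ?_, isConcat_pastWord (by simp) x
    (fun k => k < N ∨ ∃ i < N, IsConstraintFree X i (q i) x (1 + k)) (fun k hk => ?_) n⟩
  · calc _ ≤ ((N + ∑ i ∈ Finset.range N,
          Nat.count (fun k => IsConstraintFree X i (q i) x (1 + k)) n : ℕ) : ℝ) :=
          mod_cast count_lt_or_exists_lt_le N n _
      _ ≤ N + ∑ i ∈ Finset.range N, (ε / 2 * (1 / 2) ^ i * n + (Nat.card A ^ i : ℕ)) := by
          rw [Nat.cast_add, Nat.cast_sum]
          gcongr with i
          exact hq i x hx 1 n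
      _ = ε / 2 * n * ∑ i ∈ Finset.range N, (1 / 2 : ℝ) ^ i +
            (N + ∑ i ∈ Finset.range N, Nat.card A ^ i : ℕ) := by
          simp only [Finset.sum_add_distrib, Finset.mul_sum, mul_right_comm (ε / 2) _ (n : ℝ)]
          push_cast
          ring
      _ ≤ ε * n + (N + ∑ i ∈ Finset.range N, Nat.card A ^ i : ℕ) := by
          have := mul_le_mul_of_nonneg_left (sum_geometric_two_le N)
            (show 0 ≤ ε / 2 * n by positivity)
          linarith
  · push Not at hk
    obtain ⟨m, hm, hext⟩ := (hN x hx (1 + k)).resolve_right fun ⟨i, hi, h⟩ => hk.2 i hi h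
    rw [Nat.cast_succ, add_comm (k : ℤ)]
    exact ⟨pastWord x (1 + k) m, by simpa using ⟨hm.2, hm.1, hext⟩,
      pastWord_suffix x _ (by have := hm.2; omega)⟩

/-! ### Entropy and time reversal -/

theorem hTop_le_of_forall_isConcat [Finite A] [Nonempty A]
    (hX : shift '' X = X) {E : Finset (List A)} {b ε : ℝ} {C : ℕ} (hb : 0 ≤ b) (hε : 0 ≤ ε)
    (hE : ∑ v ∈ E, Real.exp (-b) ^ v.length ≤ 1 / 2)
    (h : ∀ x ∈ X, ∀ n : ℕ, ∃ j : ℕ, j ≤ ε * n + C ∧ IsConcat E j (pastWord x n n)) :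
    hTop X ≤ b + ε * Real.log (2 * Nat.card A) := by
  set a := Real.log (2 * Nat.card A) with ha
  have hA : (1 : ℝ) ≤ Nat.card A := mod_cast Nat.card_pos
  have ha0 : 0 ≤ a := Real.log_nonneg (by linarith)
  refine logGrowth_le (C := Real.exp (a * C)) (by positivity)
    (Real.one_le_exp (by positivity)) fun n => ?_
  set J := ⌊ε * n + C⌋₊
  have hJ : (J : ℝ) ≤ ε * n + C := Nat.floor_le (by positivity)
  have hsub : Lang X n ⊆ concats E J n := by
    intro w hw
    obtain ⟨x, hx, rfl⟩ := (mem_Lang_iff hX n).1 hw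
    obtain ⟨j, hj, hconcat⟩ := h x hx n
    exact ⟨by simp, hconcat.mono (Nat.le_floor hj)⟩
  have hkraft := ncard_concats_mul_pow_le (Real.exp_pos _).le (Real.exp_le_one_iff.2 (by linarith))
    hE J n
  calc ((Lang X n).ncard : ℝ)
      ≤ (concats E J n).ncard := mod_cast ncard_le_ncard hsub (finite_concats E J n)
    _ = (concats E J n).ncard * Real.exp (-b) ^ n * Real.exp (b * n) := by
        rw [mul_assoc, ← Real.exp_nat_mul, ← Real.exp_add]
        rw [show n * -b + b * n = 0 by ring, Real.exp_zero, mul_one]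
    _ ≤ (2 * Nat.card A) ^ J * Real.exp (b * n) := by gcongr
    _ = Real.exp (J * a) * Real.exp (b * n) := by
        rw [Real.exp_nat_mul, ha, Real.exp_log (by positivity)]
    _ ≤ Real.exp ((ε * n + C) * a) * Real.exp (b * n) := by gcongr
    _ = Real.exp (a * C) * Real.exp ((b + ε * a) * n) := by
        rw [← Real.exp_add, ← Real.exp_add]
        ring_nf

theorem hTop_le_hCstar [Finite A] [TopologicalSpace A] [DiscreteTopology A]
    (hX : IsSubshift X) (hper : ¬ (X ∩ Function.periodicPts shift).Nonempty) :
    hTop X ≤ hCstar X := by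
  cases isEmpty_or_nonempty A
  · exact (hTop_nonpos_of_finite hX.2 X.toFinite).trans (hCstar_nonneg X)
  refine le_of_forall_gt_imp_ge_of_dense fun b hb => le_of_forall_pos_le_add fun ε hε => ?_
  have hA : (1 : ℝ) ≤ Nat.card A := mod_cast Nat.card_pos
  have ha : 0 < Real.log (2 * Nat.card A) := Real.log_pos (by linarith)
  obtain ⟨l, hl⟩ := exists_forall_sum_exp_pow_le_half hb
  obtain ⟨E, C, hE, hconcat⟩ := exists_isConcat_pastWord hX hper l (div_pos hε ha)
  calc hTop X ≤ b + ε / Real.log (2 * Nat.card A) * Real.log (2 * Nat.card A) :=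
        hTop_le_of_forall_isConcat hX.2 ((hCstar_nonneg X).trans hb.le) (div_pos hε ha).le
          (hl E hE) hconcat
    _ = b + ε := by rw [div_mul_cancel₀ _ ha.ne']

theorem mem_rev_iff {x : ℤ → A} : x ∈ rev X ↔ (fun n => x (-n)) ∈ X :=
  ⟨by rintro ⟨y, hy, rfl⟩; simpa using hy, fun h => ⟨_, h, by simp⟩⟩

theorem image_shift_rev (hX : shift '' X = X) : shift '' rev X = rev X := by
  refine image_shift_eq fun x hx k => ?_
  rw [mem_rev_iff] at hx ⊢
  simpa [add_comm] using comp_add_mem hX hx (-k)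

theorem IsSubshift.rev [TopologicalSpace A] (hX : IsSubshift X) : IsSubshift (rev X) := by
  refine ⟨?_, image_shift_rev hX.2⟩
  rw [show QFTPaper.rev X = (fun x n => x (-n)) ⁻¹' X from ext fun _ => mem_rev_iff]
  exact hX.1.preimage (by fun_prop)

theorem Lang_rev (hX : shift '' X = X) (n : ℕ) : Lang (rev X) n = List.reverse '' Lang X n := by
  have reverse_eq : ∀ x : ℤ → A, (pastWord x 1 n).reverse = pastWord (fun i => x (-i)) n n := by
    intro x
    rw [reverse_pastWord, add_sub_cancel_right]
  ext w
  rw [mem_Lang_iff (image_shift_rev hX) n]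
  simp only [mem_image, mem_Lang_iff hX 1, rev, exists_exists_and_eq_and, reverse_eq]

theorem hTop_rev (hX : shift '' X = X) : hTop (rev X) = hTop X := by
  refine congrArg logGrowth (funext fun n => ?_)
  rw [Lang_rev hX]
  exact ncard_image_of_injective _ List.reverse_injective

theorem inter_periodicPts_nonempty_of_rev (h : (rev X ∩ Function.periodicPts shift).Nonempty) :
    (X ∩ Function.periodicPts shift).Nonempty := by
  obtain ⟨_, ⟨x, hx, rfl⟩, n, hn, hper⟩ := h
  rw [isPeriodicPt_shift_iff] at hper
  refine ⟨x, hx, n, hn, isPeriodicPt_shift_iff.2 ?_⟩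
  simpa using hper.const_sub 0

theorem IsWeakQFT.inter_periodicPts_nonempty [Finite A] [TopologicalSpace A] [DiscreteTopology A]
    (h : IsWeakQFT X) : (X ∩ Function.periodicPts shift).Nonempty := by
  by_contra hper
  refine h.2.not_ge (le_min (hTop_le_hCstar h.1 hper) ?_)
  rw [← hTop_rev h.1.2]
  exact hTop_le_hCstar h.1.rev (mt inter_periodicPts_nonempty_of_rev hper)

theorem shift_injective : Function.Injective (shift : (ℤ → A) → ℤ → A) := fun x y hxy => by
  funext i
  simpa [shift] using congrFun hxy (i - 1)

theorem finite_orbit_of_mem_periodicPts {x : ℤ → A} (hx : x ∈ Function.periodicPts shift) :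
    (orbit x).Finite := by
  obtain ⟨n, hn, hper⟩ := hx
  refine (finite_range fun m : Fin n => shift^[m] x).subset ?_
  have hiter : ∀ m, shift^[m] x ∈ range fun m : Fin n => shift^[m] x := fun m =>
    ⟨⟨m % n, Nat.mod_lt m hn⟩, hper.iterate_mod_apply m⟩
  rintro y ⟨m, rfl | hm⟩
  · exact hiter m
  · suffices y = shift^[m * n - m] x from this ▸ hiter _
    refine shift_injective.iterate m ?_
    rw [hm, ← Function.iterate_add_apply, Nat.add_sub_cancel' (Nat.le_mul_of_pos_right m hn)]
    exact (hper.const_mul m).symm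

end

/-- Every weak-QFT subshift contains a periodic point; in
particular a weak-QFT is never topologically minimal. -/
theorem weakQFT_has_periodic_point
    {A : Type*} [Fintype A] [TopologicalSpace A] [DiscreteTopology A]
    (X : Set (ℤ → A)) (h : IsWeakQFT X) :
    (∃ x ∈ X, ∃ n : ℕ, 1 ≤ n ∧ shift^[n] x = x) ∧ ¬ IsMinimal X := by
  obtain ⟨x, hx, n, hn, hper⟩ := h.inter_periodicPts_nonempty
  refine ⟨⟨x, hx, n, hn, hper⟩, fun hmin => ?_⟩
  have horbit : (orbit x).Finite := finite_orbit_of_mem_periodicPts ⟨n, hn, hper⟩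
  have hX : X.Finite := horbit.subset (horbit.isClosed.closure_eq ▸ hmin.2 x hx)
  have hpos : 0 ≤ hSCstar X := le_min (hCstar_nonneg X) (hCstar_nonneg (rev X))
  exact ((hTop_nonpos_of_finite h.1.2 hX).trans hpos).not_gt h.2

end QFTPaper
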